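/- Let ℓ ≥ 1, let r₁ ≥ 2 and r₂, …, r_ℓ be positive integers, and let G be a finite graph such that t_{K(s,r₂,…,r_ℓ)}(G) > 0 for all 0 ≤ s ≤ r₁. Then the sequence s ↦ t_{K(s,r₂,…,r_ℓ)}(G) is log-convex in the sense that the ratios t_{K(s,r₂,…,r_ℓ)}(G) / t_{K(s−1,r₂,…,r_ℓ)}(G) are non-decreasing in s; in particular t_{K(r₁,r₂,…,r_ℓ)}(G) / t_{K(r₁−1,r₂,…,r_ℓ)}(G) ≥ t_{K(1,r₂,…,r_ℓ)}(G) / t_{K(r₂,…,r_ℓ)}(G). -/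

import Mathlib

open MeasureTheory

/-- The homomorphism density `t_H(G)`. -/
noncomputable def homDensity {α β : Type*} [Fintype α] [Fintype β]
    (H : SimpleGraph α) (G : SimpleGraph β) : ℝ :=
  (Nat.card (H →g G) : ℝ) / (Fintype.card β : ℝ) ^ (Fintype.card α)

/-- The number of edges of a graph. -/
noncomputable def edgeCount {α : Type*} (H : SimpleGraph α) : ℕ :=
  Nat.card H.edgeSet

/-- `G` is `(ρ,d)`-dense: every vertex subset `X` with `|X| ≥ ρ|V(G)|`
spans at least `(d/2)|X|²` edges. -/
def LocallyDense {β : Type*} [Fintype β] (G : SimpleGraph β) (ρ d : ℝ) : Prop :=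
  ∀ X : Finset β, ρ * (Fintype.card β : ℝ) ≤ (X.card : ℝ) →
    d / 2 * (X.card : ℝ) ^ 2 ≤
      (Nat.card {e : Sym2 β // e ∈ G.edgeSet ∧ ∀ v ∈ e, v ∈ X} : ℝ)

/-- The homomorphism density of the complete multipartite graph `K(s, r₂, …, r_ℓ)`,
where the first part size of `r` is replaced by `s`. -/
noncomputable def multiSliceDensity {β : Type*} [Fintype β] (G : SimpleGraph β)
    {ℓ : ℕ} (hℓ : 0 < ℓ) (r : Fin ℓ → ℕ) (s : ℕ) : ℝ :=
  homDensity
    (SimpleGraph.completeMultipartiteGraph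
      (fun i : Fin ℓ => Fin (Function.update r ⟨0, hℓ⟩ s i))) G

open Classical in
/-- Splitting a homomorphism from a complete multipartite graph along the part `i0`. -/
noncomputable def splitHom {ι : Type*} (V : ι → Type*) {β : Type*} (G : SimpleGraph β) (i0 : ι) :
    (SimpleGraph.completeMultipartiteGraph V →g G) ≃
      Σ f : (SimpleGraph.completeMultipartiteGraph (fun i : {i // i ≠ i0} => V i) →g G),
        (V i0 → {v : β // ∀ a, G.Adj v (f a)}) where
  toFun φ := ⟨⟨fun a => φ ⟨a.1, a.2⟩, fun {a b} h => φ.map_rel' (by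
      intro h'
      exact h (Subtype.ext h'))⟩, fun x => ⟨φ ⟨i0, x⟩, fun a => φ.map_rel' (by
        intro h'
        exact a.1.2 h'.symm)⟩⟩
  invFun p := ⟨fun a => if h : a.1 = i0 then (p.2 (h ▸ a.2)).1 else p.1 ⟨⟨a.1, h⟩, a.2⟩, by
    rintro ⟨i, x⟩ ⟨j, y⟩ h
    have h : i ≠ j := h
    by_cases hi : i = i0
    · subst hi
      have hj : j ≠ i := fun e => h e.symm
      simp only [dif_neg hj, dif_pos]
      exact (p.2 x).2 _
    · by_cases hj : j = i0
      · subst hj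
        simp only [dif_neg hi, dif_pos]
        exact ((p.2 y).2 _).symm
      · simp only [dif_neg hi, dif_neg hj]
        apply p.1.map_rel'
        intro e
        exact h (congrArg Subtype.val e)⟩
  left_inv φ := by
    ext ⟨i, x⟩
    by_cases hi : i = i0
    · subst hi
      simp
    · simp [hi]
  right_inv p := by
    obtain ⟨f, g⟩ := p
    have key : ∀ (f' : (SimpleGraph.completeMultipartiteGraph
        (fun i : {i // i ≠ i0} => V i) →g G)) (g' : V i0 → {v : β // ∀ a, G.Adj v (f' a)}),
        f' = f → (∀ x, (g' x).1 = (g x).1) →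
        (⟨f', g'⟩ : Σ f : (SimpleGraph.completeMultipartiteGraph
          (fun i : {i // i ≠ i0} => V i) →g G), (V i0 → {v : β // ∀ a, G.Adj v (f a)})) =
          ⟨f, g⟩ := by
      rintro f' g' rfl hg
      have : g' = g := funext fun x => Subtype.ext (hg x)
      rw [this]
    apply key
    · ext ⟨⟨i, hi⟩, x⟩
      exact dif_neg hi
    · intro x
      exact dif_pos rfl

noncomputable instance homFintype {α β : Type*} [Fintype α] [Fintype β] (H : SimpleGraph α)
    (G : SimpleGraph β) : Fintype (H →g G) :=
  Fintype.ofFinite _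

/-- The weighted count of extensions. -/
noncomputable def extSum {ι : Type*} [Fintype ι] [DecidableEq ι] {β : Type*} [Fintype β] (G : SimpleGraph β) (i0 : ι)
    (q : {i // i ≠ i0} → ℕ)
    (s : ℕ) : ℝ :=
  ∑ f : (SimpleGraph.completeMultipartiteGraph (fun i => Fin (q i)) →g G),
    (Nat.card {v : β // ∀ a, G.Adj v (f a)} : ℝ) ^ s

theorem card_hom_eq {ι : Type*} [Fintype ι] [DecidableEq ι] {β : Type*} [Fintype β]
    (G : SimpleGraph β) (i0 : ι) (q : ι → ℕ) :
    (Nat.card (SimpleGraph.completeMultipartiteGraph (fun i => Fin (q i)) →g G) : ℝ) =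
      extSum G i0 (fun i => q i) (q i0) := by
  rw [Nat.card_congr (splitHom (fun i => Fin (q i)) G i0), Nat.card_sigma]
  simp [extSum, Nat.card_fun]

theorem multiSlice_eq {β : Type*} [Fintype β] (G : SimpleGraph β)
    {ℓ : ℕ} (hℓ : 0 < ℓ) (r : Fin ℓ → ℕ) (s : ℕ) :
    multiSliceDensity G hℓ r s = extSum G (⟨0, hℓ⟩ : Fin ℓ) (fun i => r i) s /
      (Fintype.card β : ℝ) ^ (s + ∑ i ∈ Finset.univ \ {(⟨0, hℓ⟩ : Fin ℓ)}, r i) := by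
  unfold multiSliceDensity homDensity
  have h1 : (fun i : {i : Fin ℓ // i ≠ ⟨0, hℓ⟩} => Function.update r ⟨0, hℓ⟩ s i) =
      fun i : {i : Fin ℓ // i ≠ ⟨0, hℓ⟩} => r i := by
    funext i
    exact Function.update_of_ne i.2 _ _
  rw [card_hom_eq G ⟨0, hℓ⟩, h1, Function.update_self]
  congr 2
  rw [Fintype.card_sigma]
  simp only [Fintype.card_fin]
  rw [Finset.sum_update_of_mem (Finset.mem_univ _)]

theorem multiSlice_sq {β : Type*} [Fintype β] (G : SimpleGraph β)
    {ℓ : ℕ} (hℓ : 0 < ℓ) (r : Fin ℓ → ℕ) (s : ℕ) :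
    multiSliceDensity G hℓ r (s + 1) ^ 2 ≤
      multiSliceDensity G hℓ r s * multiSliceDensity G hℓ r (s + 2) := by
  simp only [multiSlice_eq]
  rw [div_pow, div_mul_div_comm, ← pow_mul, ← pow_add]
  have e : ∀ m : ℕ, (s + 1 + m) * 2 = s + m + (s + 2 + m) := by intro m; ring
  rw [e]
  apply div_le_div_of_nonneg_right _ (by positivity)
  unfold extSum
  apply Finset.sum_sq_le_sum_mul_sum_of_sq_eq_mul
  · intros; positivity
  · intros; positivity
  · intros; ring

theorem stmt11 {β : Type*} [Fintype β] (G : SimpleGraph β)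
    (ℓ : ℕ) (hℓ : 0 < ℓ) (r : Fin ℓ → ℕ) (hr : ∀ i, 1 ≤ r i) (hr1 : 2 ≤ r ⟨0, hℓ⟩)
    (hpos : ∀ s : ℕ, s ≤ r ⟨0, hℓ⟩ → 0 < multiSliceDensity G hℓ r s) :
    (∀ s : ℕ, 1 ≤ s → s < r ⟨0, hℓ⟩ →
      multiSliceDensity G hℓ r s / multiSliceDensity G hℓ r (s - 1) ≤
        multiSliceDensity G hℓ r (s + 1) / multiSliceDensity G hℓ r s) ∧
    multiSliceDensity G hℓ r (r ⟨0, hℓ⟩) / multiSliceDensity G hℓ r (r ⟨0, hℓ⟩ - 1) ≥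
      multiSliceDensity G hℓ r 1 / multiSliceDensity G hℓ r 0 := by
  have step : ∀ s : ℕ, 1 ≤ s → s < r ⟨0, hℓ⟩ →
      multiSliceDensity G hℓ r s / multiSliceDensity G hℓ r (s - 1) ≤
        multiSliceDensity G hℓ r (s + 1) / multiSliceDensity G hℓ r s := by
    intro s hs hlt
    obtain ⟨t, rfl⟩ : ∃ t, s = t + 1 := ⟨s - 1, by omega⟩
    have h := multiSlice_sq G hℓ r t
    rw [Nat.add_sub_cancel, div_le_div_iff₀ (hpos _ (by omega)) (hpos _ (by omega))]
    have e : t + 1 + 1 = t + 2 := rfl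
    rw [e]
    nlinarith
  refine ⟨step, ?_⟩
  have all : ∀ s : ℕ, s + 1 ≤ r ⟨0, hℓ⟩ →
      multiSliceDensity G hℓ r 1 / multiSliceDensity G hℓ r 0 ≤
        multiSliceDensity G hℓ r (s + 1) / multiSliceDensity G hℓ r s := by
    intro s
    induction s with
    | zero => intro _; exact le_rfl
    | succ k ih =>
      intro hk
      have h2 := step (k + 1) (by omega) (by omega)
      rw [Nat.add_sub_cancel] at h2
      exact (ih (by omega)).trans h2
  have h := all (r ⟨0, hℓ⟩ - 1) (by omega)
  rw [Nat.sub_add_cancel (by omega)] at h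
  exact h
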